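/- arXiv:1412.4037 — 3 statements merged into one kernel-verified Lean document; each statement's English description precedes it below -/
import Mathlib

section
/- Let α > 0 and β < 1 (with α, β ∈ [0,1]). Let μ be a probability measure on Ω = ℤ → Bool that is concentrated on the set Δ of island configurations, i.e. μ(Δ) = 1 where Δ = Δ₊ ∪ Δ₋, Δ₊ = {x | {i | x i = true} is finite} and Δ₋ = {x | {i | x i = false} is finite}. Set λ = μ(Δ₋). Then the iterates F^t μ converge on thin cylinders, as t → ∞, to π_λ = (1−λ)·δ_{all-minus} + λ·δ_{all-plus}, where all-minus is the constant configuration false and all-plus is the constant configuration true. In particular, if μ(Δ₊) = 1 then F^t μ converges to δ_{all-minus}, and if μ(Δ₋) = 1 then F^t μ converges to δ_{all-plus}. -/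
/-!
The constant configurations attract through their right half-lines. For `b : Bool`, let
`tail b n` be the event that every site `i ≥ n` is in state `b`. If `x` equals `b` on `[n+1, ∞)`,
then after one step it still does almost surely, and site `n` has become `b` with probability at
least `c`, where `c = α` for `b = ⊕` and `c = 1 - β` for `b = ⊖`; moreover `tail b n` is
preserved almost surely. Hence `u t n := (F^t μ) (tail b n)` satisfies
`u (t+1) n ≥ c * u t (n+1) + (1 - c) * u t n`. As `tail b n ⊆ tail b (n+1)`, the sequence `u · n`
increases to a limit `L n`, and passing to the limit gives `L (n+1) ≤ L n` because `c > 0`.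
So `L n ≥ u 0 m` for *every* `m`, that is, `L n ≥ μ (⋃ m, tail b m)`, and this union contains all
configurations with finitely many sites different from `b`.

For `b = ⊖` and `b = ⊕` these lower bounds are at least `1 - λ` and `λ`. The two tail events are
disjoint, so both bounds are equalities in the limit. A cylinder `C` over sites in `[n, ∞)` contains
`tail b n` or is disjoint from it according to whether the constant configuration `b` lies in `C`;
the lower bounds for `C` and for its complement then squeeze `(F^t μ) C` to its limit.
-/

open MeasureTheory Filter

namespace PCA

/-- Configuration space: `true` is ⊕ (plus), `false` is ⊖ (minus). -/
abbrev Config : Type := ℤ → Bool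

/-- Transition probabilities of the PCA. -/
def theta (α β : ℝ) : Bool → Bool → ℝ
  | false, false => 0
  | true,  false => β
  | false, true  => α
  | true,  true  => 1

/-- Thin cylinder determined by a finite set of coordinates and prescribed values. -/
def cyl (S : Finset ℤ) (a : ℤ → Bool) : Set Config := {y | ∀ i ∈ S, y i = a i}

/-- `K` is the update kernel of the PCA: from configuration `x`, all sites update
independently, site `i` becoming plus with probability `theta α β (x i) (x (i+1))`.
This pins down `K x` as the corresponding product of Bernoulli measures, via its
values on thin cylinders. -/
def IsPCAKernel (α β : ℝ) (K : Config → Measure Config) : Prop :=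
  (∀ x, IsProbabilityMeasure (K x)) ∧
  ∀ (x : Config) (S : Finset ℤ) (a : ℤ → Bool),
    K x (cyl S a) =
      ∏ i ∈ S, ENNReal.ofReal
        (if a i then theta α β (x i) (x (i + 1)) else 1 - theta α β (x i) (x (i + 1)))

/-- `F` is the PCA operator with parameters `α, β`: `F μ` is `μ` bound with the
product-Bernoulli update kernel. -/
def IsPCA (α β : ℝ) (F : Measure Config → Measure Config) : Prop :=
  ∃ K : Config → Measure Config, IsPCAKernel α β K ∧
    ∀ (μ : Measure Config) (A : Set Config), MeasurableSet A →
      F μ A = ∫⁻ x, K x A ∂μ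

/-- The configuration "all minuses". -/
def allMinus : Config := fun _ => false

/-- The configuration "all pluses". -/
def allPlus : Config := fun _ => true

/-- Convergence of a sequence of measures to `ν` on all thin cylinders. -/
def TendstoCyl (seq : ℕ → Measure Config) (ν : Measure Config) : Prop :=
  ∀ (S : Finset ℤ) (a : ℤ → Bool),
    Tendsto (fun t => seq t (cyl S a)) atTop (nhds (ν (cyl S a)))

end PCA

open scoped ENNReal Topology

namespace PCA

/-- The event that every site `i ≥ n` is in state `b`. -/
def tail (b : Bool) (n : ℤ) : Set Config := {y | ∀ i, n ≤ i → y i = b}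

/-- A lower bound for the probability that a site adopts state `b` when its right neighbour is in
state `b`: the value for a site currently in the opposite state. -/
def rate (α β : ℝ) (b : Bool) : ℝ := if b then α else 1 - β

lemma measurableSet_site (b : Bool) (i : ℤ) : MeasurableSet {y : Config | y i = b} :=
  measurableSet_eq_fun (measurable_pi_apply i) measurable_const

lemma measurableSet_tail (b : Bool) (n : ℤ) : MeasurableSet (tail b n) := by
  have : tail b n = ⋂ i : ℤ, ⋂ _ : n ≤ i, {y : Config | y i = b} := by
    ext y; simp [tail]
  rw [this]
  exact MeasurableSet.iInter fun i => MeasurableSet.iInter fun _ => measurableSet_site b i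

lemma measurableSet_cyl (S : Finset ℤ) (a : ℤ → Bool) : MeasurableSet (cyl S a) := by
  have : cyl S a = ⋂ i ∈ S, {y : Config | y i = a i} := by
    ext y; simp [cyl]
  rw [this]
  exact Finset.measurableSet_biInter S fun i _ => measurableSet_site (a i) i

lemma tail_mono (b : Bool) : Monotone (tail b) :=
  fun _ _ h _ hy i hi => hy i (h.trans hi)

lemma disjoint_tail (n : ℤ) : Disjoint (tail false n) (tail true n) := by
  rw [Set.disjoint_left]
  intro y h1 h2
  have := (h1 n le_rfl).symm.trans (h2 n le_rfl)
  simp at this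

lemma finite_subset_iUnion_tail (b : Bool) :
    {x : Config | {i : ℤ | x i = !b}.Finite} ⊆ ⋃ n, tail b n := by
  intro x hx
  obtain ⟨m, hm⟩ := Set.Finite.bddAbove hx
  refine Set.mem_iUnion.2 ⟨m + 1, fun i hi => ?_⟩
  by_contra h
  have : i ≤ m := hm (show x i = !b by cases b <;> simpa using h)
  omega

section Kernel

variable {α β : ℝ} {K : Config → Measure Config}

lemma kernel_site (hK : IsPCAKernel α β K) (x : Config) (b : Bool) (i : ℤ) :
    K x {y | y i = b} = ENNReal.ofReal
      (if b then theta α β (x i) (x (i + 1)) else 1 - theta α β (x i) (x (i + 1))) := by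
  have := hK.2 x {i} (fun _ => b)
  simpa [cyl] using this

lemma kernel_tail_stable (hK : IsPCAKernel α β K) {x : Config} {b : Bool} {n : ℤ}
    (hx : x ∈ tail b n) : ∀ᵐ y ∂(K x), y ∈ tail b n := by
  have := hK.1 x
  have h : ∀ i : ℤ, ∀ᵐ y ∂(K x), n ≤ i → y i = b := by
    intro i
    by_cases hi : n ≤ i
    · have h1 : K x {y | y i = b} = 1 := by
        rw [kernel_site hK, hx i hi, hx (i + 1) (by omega)]
        cases b <;> simp [theta]
      have h2 : ∀ᵐ y ∂(K x), y i = b :=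
        (mem_ae_iff_prob_eq_one (measurableSet_site b i)).2 h1
      exact h2.mono fun y hy _ => hy
    · exact ae_of_all _ fun y hy => absurd hy hi
  exact ae_all_iff.2 h

lemma kernel_tail_grow (hα1 : α ≤ 1) (hβ0 : 0 ≤ β) (hK : IsPCAKernel α β K)
    {x : Config} {b : Bool} {n : ℤ} (hx : x ∈ tail b (n + 1)) :
    ENNReal.ofReal (rate α β b) ≤ K x (tail b n) := by
  have h1 : K x {y | y n = b} ≤ K x (tail b n) := by
    apply measure_mono_ae
    filter_upwards [kernel_tail_stable hK hx] with y hy hn i hi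
    rcases hi.eq_or_lt with rfl | h
    · exact hn
    · exact hy i h
  refine le_trans ?_ h1
  rw [kernel_site hK, hx (n + 1) le_rfl]
  apply ENNReal.ofReal_le_ofReal
  cases b <;> cases x n <;> simp [theta, rate] <;> linarith

/-- One-step inequality: the interface of a half-line of `b`s never moves right and moves left with
probability at least `rate α β b`. -/
lemma step_le (hα1 : α ≤ 1) (hβ0 : 0 ≤ β) (hK : IsPCAKernel α β K) (ν : Measure Config)
    (b : Bool) (n : ℤ) :
    ENNReal.ofReal (rate α β b) * ν (tail b (n + 1))
      + (1 - ENNReal.ofReal (rate α β b)) * ν (tail b n) ≤ ∫⁻ x, K x (tail b n) ∂ν := by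
  set c := ENNReal.ofReal (rate α β b) with hc
  have hc1 : c ≤ 1 := by
    rw [hc, ENNReal.ofReal_le_one]
    cases b <;> simp [rate] <;> linarith
  calc c * ν (tail b (n + 1)) + (1 - c) * ν (tail b n)
      = ∫⁻ x, (tail b (n + 1)).indicator (fun _ => c) x
          + (tail b n).indicator (fun _ => 1 - c) x ∂ν := by
        rw [lintegral_add_left (measurable_const.indicator (measurableSet_tail b _)),
          lintegral_indicator_const (measurableSet_tail b _),
          lintegral_indicator_const (measurableSet_tail b _)]
    _ ≤ ∫⁻ x, K x (tail b n) ∂ν := by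
        apply lintegral_mono
        intro x
        have := hK.1 x
        by_cases h0 : x ∈ tail b n
        · have h1 : x ∈ tail b (n + 1) := tail_mono b (by omega) h0
          have h2 : K x (tail b n) = 1 :=
            (mem_ae_iff_prob_eq_one (measurableSet_tail b n)).1 (kernel_tail_stable hK h0)
          simp [h0, h1, h2, add_tsub_cancel_of_le hc1]
        · by_cases h1 : x ∈ tail b (n + 1)
          · simpa [h0, h1] using kernel_tail_grow hα1 hβ0 hK h1
          · simp [h0, h1]

end Kernel

/-- The `(F^t μ)`-probability of each `tail b n` has a limit, which is at least the `μ`-mass of the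
configurations with finitely many sites different from `b`, whatever `n` is. -/
lemma exists_limit_tail {α β : ℝ} (hα0 : 0 < α) (hα1 : α ≤ 1) (hβ0 : 0 ≤ β) (hβ1 : β < 1)
    {F : Measure Config → Measure Config} {K : Config → Measure Config}
    (hK : IsPCAKernel α β K)
    (hF : ∀ (μ : Measure Config) (A : Set Config), MeasurableSet A → F μ A = ∫⁻ x, K x A ∂μ)
    (μ : Measure Config) (hprob : ∀ t, IsProbabilityMeasure (F^[t] μ)) (b : Bool) (n : ℤ) :
    ∃ L : ℝ≥0∞, Tendsto (fun t => (F^[t] μ) (tail b n)) atTop (𝓝 L) ∧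
      μ {x : Config | {i : ℤ | x i = !b}.Finite} ≤ L := by
  set c := ENNReal.ofReal (rate α β b) with hc
  have hc0 : c ≠ 0 := by
    rw [hc, Ne, ENNReal.ofReal_eq_zero, not_le]
    cases b <;> simp [rate] <;> linarith
  have hc1 : c ≤ 1 := by
    rw [hc, ENNReal.ofReal_le_one]
    cases b <;> simp [rate] <;> linarith
  have hct : c ≠ ∞ := ENNReal.ofReal_ne_top
  let u : ℕ → ℤ → ℝ≥0∞ := fun t n => (F^[t] μ) (tail b n)
  have hstep : ∀ t n, c * u t (n + 1) + (1 - c) * u t n ≤ u (t + 1) n := by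
    intro t n
    simp only [u, Function.iterate_succ_apply', hF _ _ (measurableSet_tail b n)]
    exact step_le hα1 hβ0 hK _ b n
  have hsplit : ∀ v : ℝ≥0∞, c * v + (1 - c) * v = v := by
    intro v
    rw [← add_mul, add_tsub_cancel_of_le hc1, one_mul]
  have hmono : ∀ n, Monotone fun t => u t n := by
    intro n
    refine monotone_nat_of_le_succ fun t => le_trans ?_ (hstep t n)
    calc u t n = c * u t n + (1 - c) * u t n := (hsplit _).symm
      _ ≤ c * u t (n + 1) + (1 - c) * u t n := by
        gcongr
        exact measure_mono (tail_mono b (by omega))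
  let L : ℤ → ℝ≥0∞ := fun n => ⨆ t, u t n
  have hL : ∀ n, Tendsto (fun t => u t n) atTop (𝓝 (L n)) :=
    fun n => tendsto_atTop_iSup (hmono n)
  have hLtop : ∀ n, L n ≠ ∞ := by
    intro n
    have : L n ≤ 1 := iSup_le fun t => by
      have := hprob t
      exact prob_le_one
    exact ne_top_of_le_ne_top ENNReal.one_ne_top this
  have hLstep : ∀ n, L (n + 1) ≤ L n := by
    intro n
    have h1 : c * L (n + 1) + (1 - c) * L n ≤ c * L n + (1 - c) * L n := by
      rw [hsplit]
      refine le_of_tendsto_of_tendsto' ((ENNReal.Tendsto.const_mul (hL (n + 1)) (Or.inr hct)).add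
        (ENNReal.Tendsto.const_mul (hL n) (Or.inr (by finiteness))))
        ((hL n).comp (tendsto_add_atTop_nat 1)) fun t => hstep t n
    have h2 : (1 - c) * L n ≠ ∞ := ENNReal.mul_ne_top (by finiteness) (hLtop n)
    exact (ENNReal.mul_le_mul_iff_right hc0 hct).1 ((ENNReal.add_le_add_iff_right h2).1 h1)
  have hanti : Antitone L := antitone_int_of_succ_le hLstep
  refine ⟨L n, hL n, (measure_mono (finite_subset_iUnion_tail b)).trans ?_⟩
  rw [(tail_mono b).measure_iUnion]
  refine iSup_le fun m => ?_
  calc μ (tail b m) ≤ μ (tail b (max m n)) := measure_mono (tail_mono b (le_max_left _ _))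
    _ ≤ L (max m n) := le_iSup (fun t => u t (max m n)) 0
    _ ≤ L n := hanti (le_max_right _ _)

end PCA

/-- if `α > 0`, `β < 1` and `μ` is concentrated on the islands `Δ`,
then `F^t μ` converges on thin cylinders to
`π_λ = (1-λ)·δ_allMinus + λ·δ_allPlus` with `λ = μ Δ₋`. -/
theorem pca_archipelago_limit (α β : ℝ)
    (hα0 : 0 < α) (hα1 : α ≤ 1) (hβ0 : 0 ≤ β) (hβ1 : β < 1)
    (F : Measure PCA.Config → Measure PCA.Config) (hF : PCA.IsPCA α β F)
    (μ : Measure PCA.Config) [IsProbabilityMeasure μ]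
    (hμ : μ {x : PCA.Config |
        {i : ℤ | x i = true}.Finite ∨ {i : ℤ | x i = false}.Finite} = 1) :
    PCA.TendstoCyl (fun t => F^[t] μ)
      ((1 - μ {x : PCA.Config | {i : ℤ | x i = false}.Finite}) •
          Measure.dirac PCA.allMinus
        + μ {x : PCA.Config | {i : ℤ | x i = false}.Finite} •
          Measure.dirac PCA.allPlus) := by
  obtain ⟨K, hK, hF⟩ := hF
  have hprob : ∀ t, IsProbabilityMeasure (F^[t] μ) := by
    intro t
    induction t with
    | zero => simpa
    | succ t ih =>
      refine ⟨?_⟩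
      have h1 : ∀ x, K x Set.univ = 1 := fun x => (hK.1 x).measure_univ
      rw [Function.iterate_succ_apply', hF _ _ MeasurableSet.univ]
      simp [h1]
  set l := μ {x : PCA.Config | {i : ℤ | x i = false}.Finite} with hl
  have hl1 : l ≤ 1 := prob_le_one
  have hplus : 1 - l ≤ μ {x : PCA.Config | {i : ℤ | x i = true}.Finite} := by
    rw [tsub_le_iff_right, ← hμ]
    exact measure_union_le _ _
  intro S a
  obtain ⟨n, hn⟩ := S.bddBelow
  obtain ⟨Lm, hLm, hLm'⟩ := PCA.exists_limit_tail hα0 hα1 hβ0 hβ1 hK hF μ hprob false n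
  obtain ⟨Lp, hLp, hLp'⟩ := PCA.exists_limit_tail hα0 hα1 hβ0 hβ1 hK hF μ hprob true n
  have hLm1 : 1 - l ≤ Lm := hplus.trans hLm'
  have hLp1 : l ≤ Lp := hLp'
  have hsum : Lm + Lp ≤ 1 := by
    refine le_of_tendsto' (hLm.add hLp) fun t => ?_
    have := hprob t
    rw [← measure_union (PCA.disjoint_tail n) (PCA.measurableSet_tail true n)]
    exact prob_le_one
  have hltop : l ≠ ∞ := ne_top_of_le_ne_top ENNReal.one_ne_top hl1
  have hLmtop : Lm ≠ ∞ := ne_top_of_le_ne_top ENNReal.one_ne_top (le_self_add.trans hsum)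
  have hLm_eq : Lm = 1 - l :=
    le_antisymm (ENNReal.le_sub_of_add_le_right hltop
      ((add_le_add_right hLp1 Lm).trans hsum)) hLm1
  have hLp_eq : Lp = l := by
    refine le_antisymm ?_ hLp1
    have h : Lm + Lp ≤ Lm + l := by
      rw [hLm_eq, tsub_add_cancel_of_le hl1, ← hLm_eq]; exact hsum
    exact (ENNReal.add_le_add_iff_left hLmtop).1 h
  rw [hLm_eq] at hLm
  rw [hLp_eq] at hLp
  set ν : Measure PCA.Config :=
    (1 - l) • Measure.dirac PCA.allMinus + l • Measure.dirac PCA.allPlus with hν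
  have hνprob : IsProbabilityMeasure ν := ⟨by simp [hν, tsub_add_cancel_of_le hl1]⟩
  -- The tail events inside `D` give a lower bound for the mass of `D` that converges to `ν D`.
  let g : Set PCA.Config → ℕ → ℝ≥0∞ := fun D t =>
    (F^[t] μ) (PCA.tail false n) * D.indicator 1 PCA.allMinus
      + (F^[t] μ) (PCA.tail true n) * D.indicator 1 PCA.allPlus
  have hind : ∀ (D : Set PCA.Config) (x : PCA.Config),
      D.indicator (1 : PCA.Config → ℝ≥0∞) x ≠ ∞ := by
    intro D x
    by_cases h : x ∈ D <;> simp [h]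
  have hg : ∀ D, MeasurableSet D → Tendsto (g D) atTop (𝓝 (ν D)) := by
    intro D hD
    have : ν D = (1 - l) * D.indicator 1 PCA.allMinus + l * D.indicator 1 PCA.allPlus := by
      simp [hν, Measure.dirac_apply' _ hD]
    rw [this]
    exact (ENNReal.Tendsto.mul_const hLm (Or.inr (hind _ _))).add
      (ENNReal.Tendsto.mul_const hLp (Or.inr (hind _ _)))
  have hlow : ∀ D, MeasurableSet D → (PCA.allMinus ∈ D → PCA.tail false n ⊆ D) →
      (PCA.allPlus ∈ D → PCA.tail true n ⊆ D) → ∀ t, g D t ≤ (F^[t] μ) D := by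
    intro D hD h1 h2 t
    by_cases hm : PCA.allMinus ∈ D <;> by_cases hp : PCA.allPlus ∈ D
    · simp only [g, hm, hp, Set.indicator_of_mem, Pi.one_apply, mul_one]
      rw [← measure_union (PCA.disjoint_tail n) (PCA.measurableSet_tail true n)]
      exact measure_mono (Set.union_subset (h1 hm) (h2 hp))
    · simpa [g, hm, hp] using measure_mono (h1 hm)
    · simpa [g, hm, hp] using measure_mono (h2 hp)
    · simp [g, hm, hp]
  have hC := PCA.measurableSet_cyl S a
  have key : ∀ (b : Bool) (y : PCA.Config), y ∈ PCA.tail b n →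
      (y ∈ PCA.cyl S a ↔ (fun _ => b) ∈ PCA.cyl S a) := by
    intro b y hy
    exact forall₂_congr fun i hi => by rw [hy i (hn hi)]
  have hlo := hlow _ hC (fun h y hy => (key false y hy).2 h) (fun h y hy => (key true y hy).2 h)
  have hhi := hlow _ hC.compl (fun h y hy => fun hy' => h ((key false y hy).1 hy'))
    (fun h y hy => fun hy' => h ((key true y hy).1 hy'))
  have hup : Tendsto (fun t => 1 - g (PCA.cyl S a)ᶜ t) atTop (𝓝 (ν (PCA.cyl S a))) := by
    have h := ENNReal.Tendsto.sub (tendsto_const_nhds (x := (1 : ℝ≥0∞)) (f := atTop))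
      (hg _ hC.compl) (Or.inl ENNReal.one_ne_top)
    rwa [← prob_compl_eq_one_sub hC.compl, compl_compl] at h
  refine tendsto_of_tendsto_of_tendsto_of_le_of_le (hg _ hC) hup hlo fun t => ?_
  have := hprob t
  have h := prob_compl_eq_one_sub (μ := F^[t] μ) hC.compl
  rw [compl_compl] at h
  change (F^[t] μ) (PCA.cyl S a) ≤ 1 - g (PCA.cyl S a)ᶜ t
  rw [h]
  exact tsub_le_tsub_left (hhi t) 1
end

section
/- Let α > 0 (with α, β ∈ [0,1]). Let y : ℤ → Bool be an island of minuses, i.e. {i | y i = false} is finite. Then the iterates F^t δ_y converge on thin cylinders, as t → ∞, to δ_{all-plus}, the Dirac measure at the constant configuration true. -/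
/-!
The rightmost minus of an island can only move to the left, since the pattern `⊕⊕` is updated to
`⊕` with certainty, and at every step it does so with probability at least `α`, since `⊖⊕` is
updated to `⊕` with probability `α`.

Let `plusFrom m` be the event that all sites `j ≥ m` are plus, and `a t m` its probability after
`t` steps. The observation above reads
`a (t + 1) m ≥ α * a t (m + 1) + (1 - α) * a t m` (`step_real`). As `plusFrom m ⊆ plusFrom (m + 1)`,
this makes `a t m` nondecreasing in `t`, hence convergent to some `l ≤ 1`; if `a t (m + 1) → 1`, the
limit of the inequality is `l ≥ α + (1 - α) l`, so `l = 1`. The island hypothesis gives `a t M = 1`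
for some `M`, and downward induction on `m` yields `a t m → 1` for all `m`. A thin cylinder
over `S` either contains or is disjoint from `plusFrom m` when `m` is a lower bound of `S`.

No measurability of the kernel in its first argument is needed: `F μ A` is only ever bounded from
below, by the integral of a measurable minorant of `x ↦ K x A`.
-/

open MeasureTheory Filter

namespace PCA

/-- The event that all sites `j ≥ m` are plus. -/
def plusFrom (m : ℤ) : Set Config := {x | ∀ j, m ≤ j → x j = true}

lemma measurableSet_plusFrom (m : ℤ) : MeasurableSet (plusFrom m) := by
  have h : plusFrom m = ⋂ j : ℤ, ⋂ _ : m ≤ j, (fun x : Config => x j) ⁻¹' {true} := by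
    ext x; simp [plusFrom]
  rw [h]
  exact .iInter fun j => .iInter fun _ => measurable_pi_apply j (measurableSet_singleton _)

lemma plusFrom_mono {m n : ℤ} (h : m ≤ n) : plusFrom m ⊆ plusFrom n :=
  fun _ hx j hj => hx j (h.trans hj)

lemma kernel_site_s2 {α β : ℝ} {K : Config → Measure Config} (hK : IsPCAKernel α β K)
    (x : Config) (j : ℤ) :
    K x {z | z j = true} = ENNReal.ofReal (theta α β (x j) (x (j + 1))) := by
  have h := hK.2 x {j} (fun _ => true)
  simpa [cyl] using h

/-- Two neighbouring pluses almost surely produce a plus. -/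
lemma kernel_ae_site {α β : ℝ} {K : Config → Measure Config} (hK : IsPCAKernel α β K)
    (x : Config) (j : ℤ) (h0 : x j = true) (h1 : x (j + 1) = true) :
    ∀ᵐ z ∂K x, z j = true := by
  have := hK.1 x
  have hm : MeasurableSet {z : Config | z j = true} :=
    (measurable_pi_apply (X := fun _ : ℤ => Bool) j) (measurableSet_singleton true)
  refine (prob_compl_eq_zero_iff hm).2 ?_
  rw [kernel_site_s2 hK, h0, h1]
  simp [theta]

lemma kernel_ae_plusFrom {α β : ℝ} {K : Config → Measure Config} (hK : IsPCAKernel α β K)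
    (x : Config) (m : ℤ) (hx : x ∈ plusFrom m) : ∀ᵐ z ∂K x, z ∈ plusFrom m := by
  have h : ∀ᵐ z ∂K x, ∀ j : ℤ, m ≤ j → z j = true := by
    rw [ae_all_iff]
    intro j
    by_cases hj : m ≤ j
    · filter_upwards [kernel_ae_site hK x j (hx j hj) (hx _ (by omega))] with z hz _ using hz
    · exact .of_forall fun z h => absurd h hj
  exact h

lemma kernel_plusFrom_eq_one {α β : ℝ} {K : Config → Measure Config} (hK : IsPCAKernel α β K)
    (x : Config) (m : ℤ) (hx : x ∈ plusFrom m) : K x (plusFrom m) = 1 := by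
  have := hK.1 x
  exact (prob_compl_eq_zero_iff (measurableSet_plusFrom m)).1 (kernel_ae_plusFrom hK x m hx)

/-- If the sites to the right of `m` are plus, site `m` becomes plus with probability at least
`α`, while the sites to its right stay plus. -/
lemma le_kernel_plusFrom {α β : ℝ} (hα1 : α ≤ 1) {K : Config → Measure Config}
    (hK : IsPCAKernel α β K) (x : Config) (m : ℤ) (hx : x ∈ plusFrom (m + 1)) :
    ENNReal.ofReal α ≤ K x (plusFrom m) := by
  calc ENNReal.ofReal α ≤ K x {z | z m = true} := by
        rw [kernel_site_s2 hK, hx (m + 1) le_rfl]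
        apply ENNReal.ofReal_le_ofReal
        cases x m <;> simp [theta, hα1]
    _ ≤ K x (plusFrom m) := by
        apply measure_mono_ae
        filter_upwards [kernel_ae_plusFrom hK x (m + 1) hx] with z hz hzm j hj
        rcases hj.eq_or_lt with rfl | h
        · exact hzm
        · exact hz j h

section Operator

variable {α β : ℝ} {F : Measure Config → Measure Config}

lemma isProbabilityMeasure_apply (hF : IsPCA α β F) (μ : Measure Config)
    [IsProbabilityMeasure μ] : IsProbabilityMeasure (F μ) := by
  obtain ⟨K, hK, hFK⟩ := hF
  have h (x : Config) : K x Set.univ = 1 := (hK.1 x).measure_univ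
  exact ⟨by simp [hFK μ _ .univ, h]⟩

lemma isProbabilityMeasure_iterate (hF : IsPCA α β F) (μ : Measure Config)
    [IsProbabilityMeasure μ] (t : ℕ) : IsProbabilityMeasure (F^[t] μ) := by
  induction t with
  | zero => simpa
  | succ t ih =>
    rw [Function.iterate_succ_apply']
    exact isProbabilityMeasure_apply hF _

lemma step_ennreal (hα0 : 0 < α) (hα1 : α ≤ 1) (hF : IsPCA α β F) (μ : Measure Config)
    (m : ℤ) :
    ENNReal.ofReal α * μ (plusFrom (m + 1)) + ENNReal.ofReal (1 - α) * μ (plusFrom m)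
      ≤ F μ (plusFrom m) := by
  obtain ⟨K, hK, hFK⟩ := hF
  have hm := measurableSet_plusFrom m
  have hm1 := measurableSet_plusFrom (m + 1)
  rw [hFK μ _ hm, ← lintegral_indicator_const hm1, ← lintegral_indicator_const hm,
    ← lintegral_add_left (measurable_const.indicator hm1)]
  refine lintegral_mono fun x => ?_
  by_cases h0 : x ∈ plusFrom m
  · have h1 : x ∈ plusFrom (m + 1) := plusFrom_mono (by omega) h0
    simp only [Set.indicator_of_mem h0, Set.indicator_of_mem h1,
      kernel_plusFrom_eq_one hK x m h0]
    rw [← ENNReal.ofReal_add hα0.le (by linarith)]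
    simp
  · by_cases h1 : x ∈ plusFrom (m + 1)
    · simpa [h0, h1] using le_kernel_plusFrom hα1 hK x m h1
    · simp [h0, h1]

lemma step_real (hα0 : 0 < α) (hα1 : α ≤ 1) (hF : IsPCA α β F) (μ : Measure Config)
    [IsProbabilityMeasure μ] (m : ℤ) :
    α * μ.real (plusFrom (m + 1)) + (1 - α) * μ.real (plusFrom m) ≤ (F μ).real (plusFrom m) := by
  have := isProbabilityMeasure_apply hF μ
  have h := ENNReal.toReal_mono (measure_ne_top _ _) (step_ennreal hα0 hα1 hF μ m)
  rw [ENNReal.toReal_add (ENNReal.mul_ne_top ENNReal.ofReal_ne_top (measure_ne_top _ _))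
    (ENNReal.mul_ne_top ENNReal.ofReal_ne_top (measure_ne_top _ _)), ENNReal.toReal_mul,
    ENNReal.toReal_mul, ENNReal.toReal_ofReal hα0.le, ENNReal.toReal_ofReal (by linarith)] at h
  exact h

lemma monotone_real_iterate (hα0 : 0 < α) (hα1 : α ≤ 1) (hF : IsPCA α β F)
    (μ : Measure Config) [IsProbabilityMeasure μ] (m : ℤ) :
    Monotone fun t => (F^[t] μ).real (plusFrom m) := by
  refine monotone_nat_of_le_succ fun t => ?_
  have := isProbabilityMeasure_iterate hF μ t
  have h := step_real hα0 hα1 hF (F^[t] μ) m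
  rw [Function.iterate_succ_apply']
  have h2 : (F^[t] μ).real (plusFrom m) ≤ (F^[t] μ).real (plusFrom (m + 1)) :=
    measureReal_mono (plusFrom_mono (by omega))
  nlinarith

/-- The inductive step: if the half-line right of `m` becomes all plus, so does site `m`. -/
lemma tendsto_plusFrom_of_succ (hα0 : 0 < α) (hα1 : α ≤ 1) (hF : IsPCA α β F)
    (μ : Measure Config) [IsProbabilityMeasure μ] (m : ℤ)
    (h : Tendsto (fun t => (F^[t] μ).real (plusFrom (m + 1))) atTop (nhds 1)) :
    Tendsto (fun t => (F^[t] μ).real (plusFrom m)) atTop (nhds 1) := by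
  have hle (t : ℕ) : (F^[t] μ).real (plusFrom m) ≤ 1 := by
    have := isProbabilityMeasure_iterate hF μ t
    exact measureReal_le_one
  have hl := tendsto_atTop_ciSup (monotone_real_iterate hα0 hα1 hF μ m)
    ⟨1, by rintro _ ⟨t, rfl⟩; exact hle t⟩
  set l := ⨆ t, (F^[t] μ).real (plusFrom m)
  have hl1 : l ≤ 1 := le_of_tendsto' hl hle
  have hl2 : α * 1 + (1 - α) * l ≤ l := by
    refine le_of_tendsto_of_tendsto' ((h.const_mul α).add (hl.const_mul (1 - α)))
      ((tendsto_add_atTop_iff_nat 1).2 hl) fun t => ?_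
    have := isProbabilityMeasure_iterate hF μ t
    rw [Function.iterate_succ_apply']
    exact step_real hα0 hα1 hF _ m
  have : l = 1 := le_antisymm hl1 (by nlinarith)
  rwa [this] at hl

lemma tendsto_plusFrom (hα0 : 0 < α) (hα1 : α ≤ 1) (hF : IsPCA α β F)
    (y : Config) (hy : {i : ℤ | y i = false}.Finite) (m : ℤ) :
    Tendsto (fun t => (F^[t] (Measure.dirac y)).real (plusFrom m)) atTop (nhds 1) := by
  obtain ⟨M, hM⟩ := hy.bddAbove
  have hyM : y ∈ plusFrom (M + 1) := fun j hj => by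
    by_contra h
    have : j ≤ M := hM (by simpa using h)
    omega
  -- The induction starts at a site beyond both the island and `m`.
  have start (n : ℤ) (hn : M + 1 ≤ n) :
      Tendsto (fun t => (F^[t] (Measure.dirac y)).real (plusFrom n)) atTop (nhds 1) := by
    refine tendsto_const_nhds.congr fun t => ?_
    have := isProbabilityMeasure_iterate hF (Measure.dirac y) t
    refine le_antisymm ?_ measureReal_le_one
    have h := monotone_real_iterate hα0 hα1 hF (Measure.dirac y) n (Nat.zero_le t)
    simpa [measureReal_def, Measure.dirac_apply' y (measurableSet_plusFrom n),
      plusFrom_mono hn hyM] using h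
  rcases le_total m (M + 1) with h | h
  · induction m, h using Int.leInductionDown with
    | base => exact start _ le_rfl
    | pred n _ ih =>
      refine tendsto_plusFrom_of_succ hα0 hα1 hF _ _ ?_
      simpa using ih
  · exact start m h

end Operator

end PCA

/-- if `α > 0` and `y` is an island of minuses, then `F^t δ_y`
converges on thin cylinders to `δ_allPlus`. -/
theorem pca_island_of_minuses_to_all_plus (α β : ℝ)
    (hα0 : 0 < α) (hα1 : α ≤ 1) (hβ0 : 0 ≤ β) (hβ1 : β ≤ 1)
    (F : Measure PCA.Config → Measure PCA.Config) (hF : PCA.IsPCA α β F)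
    (y : PCA.Config) (hy : {i : ℤ | y i = false}.Finite) :
    PCA.TendstoCyl (fun t => F^[t] (Measure.dirac y))
      (Measure.dirac PCA.allPlus) := by
  intro S a
  obtain ⟨m, hm⟩ := S.bddBelow
  have hprob := PCA.isProbabilityMeasure_iterate hF (Measure.dirac y)
  have key : Tendsto (fun t => (F^[t] (Measure.dirac y)) (PCA.plusFrom m)) atTop (nhds 1) := by
    have h := ENNReal.tendsto_ofReal (PCA.tendsto_plusFrom hα0 hα1 hF y hy m)
    simpa [measureReal_def] using h
  have hcyl : MeasurableSet (PCA.cyl S a) := by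
    have h : PCA.cyl S a = ⋂ i ∈ S, (fun x : PCA.Config => x i) ⁻¹' {a i} := by
      ext x; simp [PCA.cyl]
    rw [h]
    exact S.measurableSet_biInter fun i _ => measurable_pi_apply i (measurableSet_singleton _)
  rw [Measure.dirac_apply' _ hcyl]
  by_cases ha : ∀ i ∈ S, a i = true
  · have hmem : PCA.allPlus ∈ PCA.cyl S a := fun i hi => (ha i hi).symm
    rw [Set.indicator_of_mem hmem]
    refine tendsto_of_tendsto_of_tendsto_of_le_of_le key tendsto_const_nhds
      (fun t => measure_mono fun x hx i hi => ?_) fun t => prob_le_one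
    rw [ha i hi, hx i (hm hi)]
  · push Not at ha
    obtain ⟨i, hi, hai⟩ := ha
    have hmem : PCA.allPlus ∉ PCA.cyl S a := fun h => hai (h i hi).symm
    rw [Set.indicator_of_notMem hmem]
    have hc : Tendsto (fun t => 1 - (F^[t] (Measure.dirac y)) (PCA.plusFrom m)) atTop
        (nhds (1 - 1)) :=
      ENNReal.Tendsto.sub tendsto_const_nhds key (.inl ENNReal.one_ne_top)
    rw [tsub_self] at hc
    refine tendsto_of_tendsto_of_tendsto_of_le_of_le tendsto_const_nhds hc
      (fun t => zero_le) fun t => ?_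
    rw [← prob_compl_eq_one_sub (PCA.measurableSet_plusFrom m)]
    refine measure_mono fun x hx hxm => hai ?_
    rw [← hx i hi, hxm i (hm hi)]
end

section
/- Let 0 < α < 1 and 0 < β < 1 with α ≤ 1 − β, and set ᾱ = αβ, β̄ = (1−α)(1−β). Then there is no function f : ℕ → ℝ with f 0 = 0, f i ≥ 0 for all i, and (ᾱ+β̄)·f(i) = 1 + β̄·f(i+1) + ᾱ·f(i−1) for all i ≥ 1. (Hence the expected hitting time of 0 from any state i ≥ 1 for the birth-and-death chain with up-probability β̄ and down-probability ᾱ is infinite when α ≤ 1 − β.) -/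
/-!
Write `a = αβ` and `b = (1-α)(1-β)`; the hypothesis `α ≤ 1 - β` says exactly that `a ≤ b`.
The recursion says that the quantity `b * f (n+1) - a * f n` drops by `1` at each step, so it
equals `b * f 1 - n`. Since `a ≤ b` and `f ≥ 0`, the increments of `b * f` are at most
`b * f 1 - n`, whence `b * f n ≤ n * (b * f 1) - n (n-1) / 2`. This bound is negative for
large `n`, contradicting `f ≥ 0`.
-/


/-- for `0 < α < 1`, `0 < β < 1` with `α ≤ 1 - β`, there is no
nonnegative solution of the expected-hitting-time equation of the mirrored
chain `Y` (up-probability `(1-α)(1-β)`, down-probability `αβ`) vanishing at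
`0`. -/
theorem no_finite_expected_hitting_time_Y (α β : ℝ)
    (hα0 : 0 < α) (hα1 : α < 1) (hβ0 : 0 < β) (hβ1 : β < 1)
    (hcond : α ≤ 1 - β) :
    ¬ ∃ f : ℕ → ℝ, f 0 = 0 ∧ (∀ i, 0 ≤ f i) ∧
      ∀ i : ℕ, 1 ≤ i →
        (α * β + (1 - α) * (1 - β)) * f i
          = 1 + (1 - α) * (1 - β) * f (i + 1) + α * β * f (i - 1) := by
  rintro ⟨f, h0, hnn, hrec⟩
  have hb : 0 < (1 - α) * (1 - β) := mul_pos (by linarith) (by linarith)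
  have hab : α * β ≤ (1 - α) * (1 - β) := by linarith
  generalize (1 - α) * (1 - β) = b at *
  generalize α * β = a at *
  have hconst : ∀ n : ℕ, b * f (n + 1) - a * f n = b * f 1 - n := by
    intro n
    induction n with
    | zero => simp [h0]
    | succ k ih =>
      have h := hrec (k + 1) (by omega)
      rw [Nat.add_sub_cancel] at h
      push_cast
      linarith
  have hbound : ∀ n : ℕ, b * f n ≤ n * (b * f 1) - n * (n - 1) / 2 := by
    intro n
    induction n with
    | zero => simp [h0]
    | succ k ih =>
      have h1 := hconst k
      have h2 := mul_le_mul_of_nonneg_right hab (hnn k)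
      push_cast
      linarith
  obtain ⟨n, hn⟩ := exists_nat_gt (2 * (b * f 1))
  have h1 := hbound (n + 1)
  have h2 := mul_nonneg hb.le (hnn (n + 1))
  have h3 : (0 : ℝ) < (n + 1) * (n - 2 * (b * f 1)) :=
    mul_pos (by positivity) (by linarith)
  push_cast at h1
  linarith
end
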